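/- In a braided quantum group, the pentagonal twisting relation (φ⊗id)σ = (id⊗τ)(σ⊗id)(id⊗φ) holds, where τ is the secondary braiding. -/

import Mathlib

open TensorProduct LinearMap

noncomputable section

variable (A : Type*) [Ring A] [Algebra ℂ A]

/-- Two-fold tensor product of `A` with itself. -/
abbrev T2 := A ⊗[ℂ] A
/-- Three-fold tensor product (right associated). -/
abbrev T3 := A ⊗[ℂ] (A ⊗[ℂ] A)
/-- Four-fold tensor product (right associated). -/
abbrev T4 := A ⊗[ℂ] (A ⊗[ℂ] (A ⊗[ℂ] A))

variable {A}

/-- The multiplication of `A` as a linear map. -/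
def mA : T2 A →ₗ[ℂ] A := LinearMap.mul' ℂ A

/-- `f ⊗ id` : a map of `T2` acting on the factors 1,2 of `T3`. -/
def op12 (f : T2 A →ₗ[ℂ] T2 A) : T3 A →ₗ[ℂ] T3 A :=
  (TensorProduct.assoc ℂ A A A).toLinearMap ∘ₗ f.rTensor A ∘ₗ
    (TensorProduct.assoc ℂ A A A).symm.toLinearMap

/-- `id ⊗ f` : a map of `T2` acting on the factors 2,3 of `T3`. -/
def op23 (f : T2 A →ₗ[ℂ] T2 A) : T3 A →ₗ[ℂ] T3 A := f.lTensor A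

/-- `f ⊗ id ⊗ id` : a map of `T2` acting on the factors 1,2 of `T4`. -/
def op12_4 (f : T2 A →ₗ[ℂ] T2 A) : T4 A →ₗ[ℂ] T4 A :=
  (TensorProduct.assoc ℂ A A (T2 A)).toLinearMap ∘ₗ f.rTensor (T2 A) ∘ₗ
    (TensorProduct.assoc ℂ A A (T2 A)).symm.toLinearMap

/-- `id ⊗ f ⊗ id` : a map of `T2` acting on the factors 2,3 of `T4`. -/
def op23_4 (f : T2 A →ₗ[ℂ] T2 A) : T4 A →ₗ[ℂ] T4 A := (op12 f).lTensor A

/-- `id ⊗ id ⊗ f` : a map of `T2` acting on the factors 3,4 of `T4`. -/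
def op34_4 (f : T2 A →ₗ[ℂ] T2 A) : T4 A →ₗ[ℂ] T4 A := (f.lTensor A).lTensor A

/-- `m ⊗ id : T3 → T2`. -/
def m12 : T3 A →ₗ[ℂ] T2 A :=
  (mA (A := A)).rTensor A ∘ₗ (TensorProduct.assoc ℂ A A A).symm.toLinearMap

/-- `id ⊗ m : T3 → T2`. -/
def m23 : T3 A →ₗ[ℂ] T2 A := (mA (A := A)).lTensor A

/-- `m ⊗ m : T4 → T2`. -/
def mm : T4 A →ₗ[ℂ] T2 A := m12 ∘ₗ ((mA (A := A)).lTensor A).lTensor A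

/-- A braided quantum group structure on the algebra `A` (Đurđević).
`φ` is the coproduct, `ε` the counit, `κ` the antipode, `σ` the braiding
(with given inverse `σ'`). -/
structure BQG (A : Type*) [Ring A] [Algebra ℂ A] where
  φ : A →ₗ[ℂ] T2 A
  ε : A →ₗ[ℂ] ℂ
  κ : A →ₗ[ℂ] A
  σ : T2 A →ₗ[ℂ] T2 A
  σ' : T2 A →ₗ[ℂ] T2 A
  σ_comp : σ ∘ₗ σ' = LinearMap.id
  comp_σ : σ' ∘ₗ σ = LinearMap.id
  κ_bij : Function.Bijective κ
  /-- coassociativity `(φ⊗id)φ = (id⊗φ)φ` -/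
  coassoc : (TensorProduct.assoc ℂ A A A).toLinearMap ∘ₗ φ.rTensor A ∘ₗ φ = φ.lTensor A ∘ₗ φ
  /-- `(ε⊗id)φ = id` -/
  counit_left : (TensorProduct.lid ℂ A).toLinearMap ∘ₗ ε.rTensor A ∘ₗ φ = LinearMap.id
  /-- `(id⊗ε)φ = id` -/
  counit_right : (TensorProduct.rid ℂ A).toLinearMap ∘ₗ ε.lTensor A ∘ₗ φ = LinearMap.id
  /-- `σ(m⊗id) = (id⊗m)(σ⊗id)(id⊗σ)` -/
  braid_mul_left : σ ∘ₗ m12 = m23 ∘ₗ op12 σ ∘ₗ op23 σ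
  /-- `σ(id⊗m) = (m⊗id)(id⊗σ)(σ⊗id)` -/
  braid_mul_right : σ ∘ₗ m23 = m12 ∘ₗ op23 σ ∘ₗ op12 σ
  /-- `φm = (m⊗m)(id⊗σ⊗id)(φ⊗φ)` -/
  comul_mul : φ ∘ₗ mA = mm ∘ₗ op23_4 σ ∘ₗ
      (TensorProduct.assoc ℂ A A (T2 A)).toLinearMap ∘ₗ φ.rTensor (T2 A) ∘ₗ φ.lTensor A
  /-- `(σ⊗id²)(id⊗φ⊗id)(σ⁻¹⊗id)(id⊗φ) = (id²⊗σ)(id⊗φ⊗id)(id⊗σ⁻¹)(φ⊗id)` -/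
  mixed_coassoc :
    op12_4 σ ∘ₗ ((TensorProduct.assoc ℂ A A A).toLinearMap ∘ₗ φ.rTensor A).lTensor A ∘ₗ
        op12 σ' ∘ₗ φ.lTensor A
      = op34_4 σ ∘ₗ ((TensorProduct.assoc ℂ A A A).toLinearMap ∘ₗ φ.rTensor A).lTensor A ∘ₗ
        op23 σ' ∘ₗ (TensorProduct.assoc ℂ A A A).toLinearMap ∘ₗ φ.rTensor A
  /-- `m(κ⊗id)φ = 1ε` -/
  antipode_left : mA ∘ₗ κ.rTensor A ∘ₗ φ = Algebra.linearMap ℂ A ∘ₗ ε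
  /-- `m(id⊗κ)φ = 1ε` -/
  antipode_right : mA ∘ₗ κ.lTensor A ∘ₗ φ = Algebra.linearMap ℂ A ∘ₗ ε

namespace BQG

variable {A : Type*} [Ring A] [Algebra ℂ A] (G : BQG A)

/-- `φ ⊗ id : T2 → T3`. -/
def φ1 : T2 A →ₗ[ℂ] T3 A := (TensorProduct.assoc ℂ A A A).toLinearMap ∘ₗ G.φ.rTensor A

/-- `id ⊗ φ : T2 → T3`. -/
def φ2 : T2 A →ₗ[ℂ] T3 A := G.φ.lTensor A

/-- `id² ⊗ ε : T3 → T2`. -/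
def ε3r : T3 A →ₗ[ℂ] T2 A :=
  ((TensorProduct.rid ℂ A).toLinearMap ∘ₗ G.ε.lTensor A).lTensor A

/-- `ε ⊗ id² : T3 → T2`. -/
def ε3l : T3 A →ₗ[ℂ] T2 A :=
  (TensorProduct.lid ℂ (T2 A)).toLinearMap ∘ₗ G.ε.rTensor (T2 A)

/-- The secondary braiding `τ = (id²⊗ε)(id⊗σ⁻¹)(φ⊗id)σ`. -/
def τ : T2 A →ₗ[ℂ] T2 A := G.ε3r ∘ₗ op23 G.σ' ∘ₗ G.φ1 ∘ₗ G.σ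

/-- `ε ⊗ ε : T2 → ℂ`. -/
def εε : T2 A →ₗ[ℂ] ℂ :=
  (TensorProduct.lid ℂ ℂ).toLinearMap ∘ₗ G.ε.rTensor ℂ ∘ₗ G.ε.lTensor A

end BQG

/-!
All maps are considered with a spectator factor `X`, as maps between the right-nested products
`A ⊗ X`, `A ⊗ (A ⊗ X)`, …, so that `f ⊗ id` and `id ⊗ f` are always composable.

Put `τ⁻¹ = (id² ⊗ ε)(id ⊗ σ)(φ ⊗ id)σ⁻¹`. Applying `ε` to the last factor of mixed coassociativity
gives `(σ ⊗ id)(id ⊗ φ)σ⁻¹ = (id ⊗ τ⁻¹)(φ ⊗ id)`, so the pentagon relation amounts to `ττ⁻¹ = id`.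

To invert `τ⁻¹`, apply `id ⊗ ε` and `ε ⊗ id` to `φm = (m ⊗ m)(id ⊗ σ ⊗ id)(φ ⊗ φ)` and cancel the
multiplication with the antipode. With `h = εmτ⁻¹`, which turns out to be `(ε ⊗ ε)σ⁻¹`, this yields
`(id ⊗ h)(φ ⊗ id) = (ε ⊗ id)σ⁻¹` and `(h ⊗ id)(id ⊗ φ) = (id ⊗ ε)σ⁻¹`. Hence the two formulas
`(id² ⊗ ε)(id ⊗ σ⁻¹)(φ ⊗ id)` and `(ε ⊗ id²)(σ⁻¹ ⊗ id)(id ⊗ φ)` for `τσ⁻¹` agree. Comparing them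
shows that `τ⁻¹` is a left inverse of `τ`, and then that `στ⁻¹` is a two-sided inverse of `τσ⁻¹`.
-/

section LTensorDiagrams

variable {R : Type*} [CommSemiring R] (M : Type*) [AddCommMonoid M] [Module R M]
variable {N P Q N' P' : Type*} [AddCommMonoid N] [Module R N] [AddCommMonoid P] [Module R P]
  [AddCommMonoid Q] [Module R Q] [AddCommMonoid N'] [Module R N'] [AddCommMonoid P'] [Module R P']

theorem lTensor_triangle {f : N →ₗ[R] P} {g : P →ₗ[R] Q} {k : N →ₗ[R] Q}
    (h : ∀ x, g (f x) = k x) (x : M ⊗[R] N) : g.lTensor M (f.lTensor M x) = k.lTensor M x := by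
  rw [← lTensor_comp_apply, show g ∘ₗ f = k from LinearMap.ext h]

theorem lTensor_leftInverse {f : N →ₗ[R] P} {g : P →ₗ[R] N} (h : Function.LeftInverse g f) :
    Function.LeftInverse (g.lTensor M) (f.lTensor M) := fun x => by
  rw [lTensor_triangle M (k := LinearMap.id) h, lTensor_id_apply]

theorem lTensor_square {f : N →ₗ[R] P} {g : P →ₗ[R] Q} {f' : N →ₗ[R] P'} {g' : P' →ₗ[R] Q}
    (h : ∀ x, g (f x) = g' (f' x)) (x : M ⊗[R] N) :
    g.lTensor M (f.lTensor M x) = g'.lTensor M (f'.lTensor M x) := by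
  rw [lTensor_triangle M (k := g' ∘ₗ f') h, lTensor_comp_apply]

theorem lTensor_trapezoid {f : N →ₗ[R] N'} {g : N' →ₗ[R] P} {g' : P →ₗ[R] Q} {k : N →ₗ[R] Q}
    (h : ∀ x, g' (g (f x)) = k x) (x : M ⊗[R] N) :
    g'.lTensor M (g.lTensor M (f.lTensor M x)) = k.lTensor M x := by
  rw [← lTensor_comp_apply, lTensor_triangle M h]

theorem lTensor_pentagon {f : N →ₗ[R] P} {g : P →ₗ[R] Q}
    {f' : N →ₗ[R] N'} {g' : N' →ₗ[R] P'} {k' : P' →ₗ[R] Q}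
    (h : ∀ x, g (f x) = k' (g' (f' x))) (x : M ⊗[R] N) :
    g.lTensor M (f.lTensor M x) = k'.lTensor M (g'.lTensor M (f'.lTensor M x)) := by
  rw [lTensor_square M (g' := k' ∘ₗ g') h, lTensor_comp_apply]

end LTensorDiagrams

section HeadMaps

variable {R : Type*} [CommSemiring R]
variable {M N M' N' K X Y : Type*}
  [AddCommMonoid M] [Module R M] [AddCommMonoid N] [Module R N]
  [AddCommMonoid M'] [Module R M'] [AddCommMonoid N'] [Module R N']
  [AddCommMonoid K] [Module R K] [AddCommMonoid X] [Module R X] [AddCommMonoid Y] [Module R Y]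

/-- `f ⊗ id_X` for `f` from two tensor factors to two, on right-nested tensor products.
The subscripts of `headMap` count the factors consumed and produced. -/
def headMap₂₂ (f : M ⊗[R] N →ₗ[R] M' ⊗[R] N') (X : Type*) [AddCommMonoid X] [Module R X] :
    M ⊗[R] (N ⊗[R] X) →ₗ[R] M' ⊗[R] (N' ⊗[R] X) :=
  (TensorProduct.assoc R M' N' X).toLinearMap ∘ₗ f.rTensor X ∘ₗ
    (TensorProduct.assoc R M N X).symm.toLinearMap

/-- `f ⊗ id_X` for `f` from one tensor factor to two, on right-nested tensor products. -/
def headMap₁₂ (f : K →ₗ[R] M ⊗[R] N) (X : Type*) [AddCommMonoid X] [Module R X] :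
    K ⊗[R] X →ₗ[R] M ⊗[R] (N ⊗[R] X) :=
  (TensorProduct.assoc R M N X).toLinearMap ∘ₗ f.rTensor X

/-- `f ⊗ id_X` for `f` from two tensor factors to one, on right-nested tensor products. -/
def headMap₂₁ (f : M ⊗[R] N →ₗ[R] K) (X : Type*) [AddCommMonoid X] [Module R X] :
    M ⊗[R] (N ⊗[R] X) →ₗ[R] K ⊗[R] X :=
  f.rTensor X ∘ₗ (TensorProduct.assoc R M N X).symm.toLinearMap

/-- `f ⊗ id_X` for a functional `f`, with the resulting scalar factor absorbed into `X`. -/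
def headMap₁₀ (f : K →ₗ[R] R) (X : Type*) [AddCommMonoid X] [Module R X] : K ⊗[R] X →ₗ[R] X :=
  (TensorProduct.lid R X).toLinearMap ∘ₗ f.rTensor X

@[simp]
theorem headMap₂₂_assoc_tmul (f : M ⊗[R] N →ₗ[R] M' ⊗[R] N') (y : M ⊗[R] N) (x : X) :
    headMap₂₂ f X (TensorProduct.assoc R M N X (y ⊗ₜ x)) =
      TensorProduct.assoc R M' N' X (f y ⊗ₜ x) := by
  simp [headMap₂₂]

@[simp]
theorem headMap₁₂_tmul (f : K →ₗ[R] M ⊗[R] N) (k : K) (x : X) :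
    headMap₁₂ f X (k ⊗ₜ x) = TensorProduct.assoc R M N X (f k ⊗ₜ x) := rfl

@[simp]
theorem headMap₂₁_assoc_tmul (f : M ⊗[R] N →ₗ[R] K) (y : M ⊗[R] N) (x : X) :
    headMap₂₁ f X (TensorProduct.assoc R M N X (y ⊗ₜ x)) = f y ⊗ₜ x := by
  simp [headMap₂₁]

@[simp]
theorem headMap₁₀_tmul (f : K →ₗ[R] R) (k : K) (x : X) : headMap₁₀ f X (k ⊗ₜ x) = f k • x := by
  simp [headMap₁₀]

theorem induction_on_assoc_tmul {p : M ⊗[R] (N ⊗[R] X) → Prop} (z : M ⊗[R] (N ⊗[R] X)) (zero : p 0)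
    (assoc_tmul : ∀ y x, p (TensorProduct.assoc R M N X (y ⊗ₜ x)))
    (add : ∀ z w, p z → p w → p (z + w)) : p z := by
  obtain ⟨w, rfl⟩ := (TensorProduct.assoc R M N X).surjective z
  induction w using TensorProduct.induction_on with
  | zero => rwa [map_zero]
  | tmul y x => exact assoc_tmul y x
  | add v w hv hw => rw [map_add]; exact add _ _ hv hw

theorem lTensor_lTensor_assoc_tmul (g : X →ₗ[R] Y) (y : M ⊗[R] N) (x : X) :
    (g.lTensor N).lTensor M (TensorProduct.assoc R M N X (y ⊗ₜ x)) =
      TensorProduct.assoc R M N Y (y ⊗ₜ g x) := by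
  induction y using TensorProduct.induction_on with
  | zero => simp
  | tmul m n => simp
  | add y z hy hz => simp only [TensorProduct.add_tmul, map_add, hy, hz]

theorem headMap₂₂_lTensor (f : M ⊗[R] N →ₗ[R] M' ⊗[R] N') (g : X →ₗ[R] Y)
    (z : M ⊗[R] (N ⊗[R] X)) :
    headMap₂₂ f Y ((g.lTensor N).lTensor M z) =
      (g.lTensor N').lTensor M' (headMap₂₂ f X z) := by
  induction z using induction_on_assoc_tmul with
  | zero => simp only [map_zero]
  | assoc_tmul y x => simp only [lTensor_lTensor_assoc_tmul, headMap₂₂_assoc_tmul]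
  | add z w hz hw => simp only [map_add, hz, hw]

theorem headMap₁₂_lTensor (f : K →ₗ[R] M ⊗[R] N) (g : X →ₗ[R] Y) (z : K ⊗[R] X) :
    headMap₁₂ f Y (g.lTensor K z) = (g.lTensor N).lTensor M (headMap₁₂ f X z) := by
  induction z using TensorProduct.induction_on with
  | zero => simp only [map_zero]
  | tmul k x => simp only [lTensor_tmul, headMap₁₂_tmul, lTensor_lTensor_assoc_tmul]
  | add z w hz hw => simp only [map_add, hz, hw]

theorem headMap₂₁_lTensor (f : M ⊗[R] N →ₗ[R] K) (g : X →ₗ[R] Y) (z : M ⊗[R] (N ⊗[R] X)) :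
    headMap₂₁ f Y ((g.lTensor N).lTensor M z) = g.lTensor K (headMap₂₁ f X z) := by
  induction z using induction_on_assoc_tmul with
  | zero => simp only [map_zero]
  | assoc_tmul y x => simp only [lTensor_lTensor_assoc_tmul, headMap₂₁_assoc_tmul, lTensor_tmul]
  | add z w hz hw => simp only [map_add, hz, hw]

theorem headMap₁₀_lTensor (f : K →ₗ[R] R) (g : X →ₗ[R] Y) (z : K ⊗[R] X) :
    headMap₁₀ f Y (g.lTensor K z) = g (headMap₁₀ f X z) := by
  induction z using TensorProduct.induction_on with
  | zero => simp only [map_zero]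
  | tmul k x => simp only [lTensor_tmul, headMap₁₀_tmul, map_smul]
  | add z w hz hw => simp only [map_add, hz, hw]

end HeadMaps

section TailExtension

variable {R : Type*} [CommSemiring R]
variable {M N M' N' K L J X K' L' J' : Type*}
  [AddCommMonoid M] [Module R M] [AddCommMonoid N] [Module R N]
  [AddCommMonoid M'] [Module R M'] [AddCommMonoid N'] [Module R N']
  [AddCommMonoid K] [Module R K] [AddCommMonoid L] [Module R L] [AddCommMonoid J] [Module R J]
  [AddCommMonoid K'] [Module R K'] [AddCommMonoid L'] [Module R L']
  [AddCommMonoid J'] [Module R J'] [AddCommMonoid X] [Module R X]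

/-- The right-nesting of `(M ⊗ L) ⊗ X` obtained from a right-nesting `e` of `L ⊗ X`. -/
def rightNest (M : Type*) [AddCommMonoid M] [Module R M] (e : L ⊗[R] X ≃ₗ[R] L') :
    (M ⊗[R] L) ⊗[R] X ≃ₗ[R] M ⊗[R] L' :=
  TensorProduct.assoc R M L X ≪≫ₗ e.lTensor M

@[simp]
theorem rightNest_tmul (e : L ⊗[R] X ≃ₗ[R] L') (m : M) (l : L) (x : X) :
    rightNest M e ((m ⊗ₜ l) ⊗ₜ x) = m ⊗ₜ e (l ⊗ₜ x) := rfl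

theorem rightNest_refl (M N X : Type*) [AddCommMonoid M] [Module R M] [AddCommMonoid N] [Module R N]
    [AddCommMonoid X] [Module R X] :
    rightNest M (LinearEquiv.refl R (N ⊗[R] X)) = TensorProduct.assoc R M N X := by
  ext z
  simp [rightNest, LinearEquiv.lTensor]

theorem rightNest_rightNest_assoc (e : L ⊗[R] X ≃ₗ[R] L') (y : M ⊗[R] N) (l : L) (x : X) :
    rightNest M (rightNest N e) (TensorProduct.assoc R M N L (y ⊗ₜ l) ⊗ₜ x) =
      TensorProduct.assoc R M N L' (y ⊗ₜ e (l ⊗ₜ x)) := by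
  induction y using TensorProduct.induction_on with
  | zero => simp
  | tmul m n => simp
  | add y z hy hz => simp only [TensorProduct.add_tmul, map_add, hy, hz]

/-- `F` is `f ⊗ id_X`, read through the re-bracketings `e` and `e'` of its source and target. It
carries identities between maps on `A ⊗ ⋯ ⊗ A` over to maps on `A ⊗ (⋯ ⊗ (A ⊗ X))` and back. -/
def IsTailExtension (e : K ⊗[R] X ≃ₗ[R] K') (e' : L ⊗[R] X ≃ₗ[R] L')
    (f : K →ₗ[R] L) (F : K' →ₗ[R] L') : Prop :=
  ∀ k x, F (e (k ⊗ₜ x)) = e' (f k ⊗ₜ x)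

namespace IsTailExtension

variable {e : K ⊗[R] X ≃ₗ[R] K'} {e' : L ⊗[R] X ≃ₗ[R] L'} {e'' : J ⊗[R] X ≃ₗ[R] J'}

theorem comp {f : K →ₗ[R] L} {F : K' →ₗ[R] L'} {g : L →ₗ[R] J} {G : L' →ₗ[R] J'}
    (hg : IsTailExtension e' e'' g G) (hf : IsTailExtension e e' f F) :
    IsTailExtension e e'' (g ∘ₗ f) (G ∘ₗ F) := fun k x => by
  rw [LinearMap.comp_apply, hf, hg, LinearMap.comp_apply]

theorem lTensor {f : K →ₗ[R] L} {F : K' →ₗ[R] L'} (hf : IsTailExtension e e' f F)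
    (M : Type*) [AddCommMonoid M] [Module R M] :
    IsTailExtension (rightNest M e) (rightNest M e') (f.lTensor M) (F.lTensor M) := fun z x => by
  induction z using TensorProduct.induction_on with
  | zero => simp
  | tmul m k => simp only [rightNest_tmul, lTensor_tmul, hf k x]
  | add z w hz hw => simp only [TensorProduct.add_tmul, map_add, hz, hw]

theorem headMap₂₂ (e : L ⊗[R] X ≃ₗ[R] L') (f : M ⊗[R] N →ₗ[R] M' ⊗[R] N') :
    IsTailExtension (rightNest M (rightNest N e)) (rightNest M' (rightNest N' e))
      (headMap₂₂ f L) (headMap₂₂ f L') := fun z x => by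
  induction z using induction_on_assoc_tmul with
  | zero => simp
  | assoc_tmul y l => simp only [rightNest_rightNest_assoc, headMap₂₂_assoc_tmul]
  | add z w hz hw => simp only [TensorProduct.add_tmul, map_add, hz, hw]

theorem headMap₁₂ (e : L ⊗[R] X ≃ₗ[R] L') (f : K →ₗ[R] M ⊗[R] N) :
    IsTailExtension (rightNest K e) (rightNest M (rightNest N e))
      (headMap₁₂ f L) (headMap₁₂ f L') := fun z x => by
  induction z using TensorProduct.induction_on with
  | zero => simp
  | tmul k l => simp only [rightNest_tmul, rightNest_rightNest_assoc, headMap₁₂_tmul]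
  | add z w hz hw => simp only [TensorProduct.add_tmul, map_add, hz, hw]

theorem headMap₂₁ (e : L ⊗[R] X ≃ₗ[R] L') (f : M ⊗[R] N →ₗ[R] K) :
    IsTailExtension (rightNest M (rightNest N e)) (rightNest K e)
      (headMap₂₁ f L) (headMap₂₁ f L') := fun z x => by
  induction z using induction_on_assoc_tmul with
  | zero => simp
  | assoc_tmul y l => simp only [rightNest_rightNest_assoc, headMap₂₁_assoc_tmul, rightNest_tmul]
  | add z w hz hw => simp only [TensorProduct.add_tmul, map_add, hz, hw]

theorem headMap₁₀ (e : L ⊗[R] X ≃ₗ[R] L') (f : K →ₗ[R] R) :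
    IsTailExtension (rightNest K e) e (headMap₁₀ f L) (headMap₁₀ f L') := fun z x => by
  induction z using TensorProduct.induction_on with
  | zero => simp
  | tmul k l => simp only [rightNest_tmul, headMap₁₀_tmul, ← TensorProduct.smul_tmul', map_smul]
  | add z w hz hw => simp only [TensorProduct.add_tmul, map_add, hz, hw]

theorem rTensor (e : L ⊗[R] X ≃ₗ[R] L') (f : K →ₗ[R] J) :
    IsTailExtension (rightNest K e) (rightNest J e) (f.rTensor L) (f.rTensor L') := fun z x => by
  induction z using TensorProduct.induction_on with
  | zero => simp
  | tmul k l => simp only [rightNest_tmul, rTensor_tmul]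
  | add z w hz hw => simp only [TensorProduct.add_tmul, map_add, hz, hw]

theorem id (e : K ⊗[R] X ≃ₗ[R] K') :
    IsTailExtension e e LinearMap.id LinearMap.id := fun _ _ => rfl

variable (X)

theorem headMap₂₂_self (f : M ⊗[R] N →ₗ[R] M' ⊗[R] N') :
    IsTailExtension (rightNest M (.refl R (N ⊗[R] X))) (rightNest M' (.refl R (N' ⊗[R] X)))
      f (_root_.headMap₂₂ f X) := fun y x => by
  simp only [rightNest_refl, headMap₂₂_assoc_tmul]

theorem headMap₁₂_self (f : K →ₗ[R] M ⊗[R] N) :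
    IsTailExtension (.refl R (K ⊗[R] X)) (rightNest M (.refl R (N ⊗[R] X)))
      f (_root_.headMap₁₂ f X) := fun k x => by
  simp only [rightNest_refl, LinearEquiv.refl_apply, headMap₁₂_tmul]

theorem headMap₂₁_self (f : M ⊗[R] N →ₗ[R] K) :
    IsTailExtension (rightNest M (.refl R (N ⊗[R] X))) (.refl R (K ⊗[R] X))
      f (_root_.headMap₂₁ f X) := fun y x => by
  simp only [rightNest_refl, LinearEquiv.refl_apply, headMap₂₁_assoc_tmul]

theorem rTensor_self (f : K →ₗ[R] L) :
    IsTailExtension (.refl R (K ⊗[R] X)) (.refl R (L ⊗[R] X)) f (f.rTensor X) := fun _ _ => rfl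

theorem algebraLinearMap_comp (B : Type*) [Semiring B] [Algebra R B] (f : K →ₗ[R] R) :
    IsTailExtension (.refl R (K ⊗[R] X)) (.refl R (B ⊗[R] X))
      (Algebra.linearMap R B ∘ₗ f) (TensorProduct.mk R B X 1 ∘ₗ _root_.headMap₁₀ f X) :=
  fun k x => by
    simp [Algebra.algebraMap_eq_smul_one, TensorProduct.smul_tmul]

theorem rid_comp_lTensor (M : Type*) [AddCommMonoid M] [Module R M] (f : K →ₗ[R] R) :
    IsTailExtension (rightNest M (.refl R (K ⊗[R] X))) (.refl R (M ⊗[R] X))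
      ((TensorProduct.rid R M).toLinearMap ∘ₗ f.lTensor M)
      ((_root_.headMap₁₀ f X).lTensor M) := fun z x => by
  induction z using TensorProduct.induction_on with
  | zero => simp
  | tmul m k => simp [TensorProduct.smul_tmul]
  | add z w hz hw => simp only [TensorProduct.add_tmul, map_add, hz, hw]

variable {X}

theorem extension_congr {f f' : K →ₗ[R] L} {F F' : K' →ₗ[R] L'} (h : IsTailExtension e e' f F)
    (h' : IsTailExtension e e' f' F') (hf : f = f') : F = F' := by
  subst hf
  suffices F ∘ₗ e.toLinearMap = F' ∘ₗ e.toLinearMap from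
    (LinearMap.cancel_right e.surjective).mp this
  exact TensorProduct.ext' fun k x => (h k x).trans (h' k x).symm

theorem eq_of_extension_eq {e : K ⊗[R] R ≃ₗ[R] K'} {e' : L ⊗[R] R ≃ₗ[R] L'} {f f' : K →ₗ[R] L}
    {F F' : K' →ₗ[R] L'} (h : IsTailExtension e e' f F) (h' : IsTailExtension e e' f' F')
    (hF : F = F') : f = f' := by
  subst hF
  ext k
  have : f k ⊗ₜ[R] (1 : R) = f' k ⊗ₜ 1 := e'.injective ((h k 1).symm.trans (h' k 1))
  simpa using congrArg (TensorProduct.rid R L) this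

end IsTailExtension

end TailExtension

section MulHeadMap

variable {R A : Type*} [CommSemiring R] [Semiring A] [Algebra R A]
variable {X : Type*} [AddCommMonoid X] [Module R X]

theorem headMap₂₁_mul'_assoc (x : A ⊗[R] (A ⊗[R] (A ⊗[R] X))) :
    headMap₂₁ (mul' R A) X ((headMap₂₁ (mul' R A) X).lTensor A x) =
      headMap₂₁ (mul' R A) X (headMap₂₁ (mul' R A) (A ⊗[R] X) x) := by
  suffices headMap₂₁ (mul' R A) X ∘ₗ (headMap₂₁ (mul' R A) X).lTensor A =
      headMap₂₁ (mul' R A) X ∘ₗ headMap₂₁ (mul' R A) (A ⊗[R] X) from LinearMap.congr_fun this x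
  ext a b c x
  simp [headMap₂₁, mul_assoc]

theorem headMap₂₁_mul'_one_tmul (x : A ⊗[R] X) :
    headMap₂₁ (mul' R A) X ((1 : A) ⊗ₜ x) = x := by
  suffices headMap₂₁ (mul' R A) X ∘ₗ TensorProduct.mk R A (A ⊗[R] X) 1 = LinearMap.id from
    LinearMap.congr_fun this x
  ext a x
  simp [headMap₂₁]

theorem headMap₂₁_mul'_lTensor_one_tmul (x : A ⊗[R] X) :
    headMap₂₁ (mul' R A) X ((TensorProduct.mk R A X 1).lTensor A x) = x := by
  suffices headMap₂₁ (mul' R A) X ∘ₗ (TensorProduct.mk R A X 1).lTensor A = LinearMap.id from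
    LinearMap.congr_fun this x
  ext a x
  simp [headMap₂₁]

end MulHeadMap

/-- The part of the structure of a braided quantum group that governs its secondary braiding,
over a commutative semiring: an antipode `κ` and a bijective braiding `σ` on an algebra and
coalgebra `A`, where `σ` need not be compatible with the multiplication nor `κ` be bijective. -/
structure PreBQG (R A : Type*) [CommSemiring R] [Semiring A] [Algebra R A] [Coalgebra R A] where
  κ : A →ₗ[R] A
  σ : A ⊗[R] A ≃ₗ[R] A ⊗[R] A
  comul_mul : Coalgebra.comul ∘ₗ LinearMap.mul' R A =
    headMap₂₁ (LinearMap.mul' R A) A ∘ₗ ((LinearMap.mul' R A).lTensor A).lTensor A ∘ₗ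
      (headMap₂₂ σ.toLinearMap A).lTensor A ∘ₗ
        headMap₁₂ Coalgebra.comul (A ⊗[R] A) ∘ₗ Coalgebra.comul.lTensor A
  mixed_coassoc :
    headMap₂₂ σ.toLinearMap (A ⊗[R] A) ∘ₗ (headMap₁₂ Coalgebra.comul A).lTensor A ∘ₗ
        headMap₂₂ σ.symm.toLinearMap A ∘ₗ Coalgebra.comul.lTensor A =
      (σ.toLinearMap.lTensor A).lTensor A ∘ₗ (headMap₁₂ Coalgebra.comul A).lTensor A ∘ₗ
        σ.symm.toLinearMap.lTensor A ∘ₗ headMap₁₂ Coalgebra.comul A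
  mul_antipode_left : LinearMap.mul' R A ∘ₗ κ.rTensor A ∘ₗ Coalgebra.comul =
    Algebra.linearMap R A ∘ₗ Coalgebra.counit
  mul_antipode_right : LinearMap.mul' R A ∘ₗ κ.lTensor A ∘ₗ Coalgebra.comul =
    Algebra.linearMap R A ∘ₗ Coalgebra.counit

namespace PreBQG

variable {R A : Type*} [CommSemiring R] [Semiring A] [Algebra R A] [Coalgebra R A]
variable (H : PreBQG R A) {X Y : Type*} [AddCommMonoid X] [Module R X]
  [AddCommMonoid Y] [Module R Y]

local prefix:max "↟" => LinearMap.lTensor A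
local notation "Φ" => headMap₁₂ (Coalgebra.comul (R := R) (A := A)) _
local notation "ℰ" => headMap₁₀ (Coalgebra.counit (R := R) (A := A)) _
local notation "μ" => headMap₂₁ (LinearMap.mul' R A) _
local notation "𝓚" => LinearMap.rTensor _ (PreBQG.κ H)
local notation "𝓢" => headMap₂₂ (LinearEquiv.toLinearMap (PreBQG.σ H)) _
local notation "𝓢⁻" => headMap₂₂ (LinearEquiv.toLinearMap (LinearEquiv.symm (PreBQG.σ H))) _

theorem braid_braidInv (x : A ⊗[R] (A ⊗[R] X)) : 𝓢 (𝓢⁻ x) = x := by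
  simp [headMap₂₂, ← rTensor_comp_apply]

theorem braidInv_braid (x : A ⊗[R] (A ⊗[R] X)) : 𝓢⁻ (𝓢 x) = x := by
  simp [headMap₂₂, ← rTensor_comp_apply]

theorem comul_comul (x : A ⊗[R] X) : Φ (Φ x) = ↟Φ (Φ x) := by
  have comul := IsTailExtension.headMap₁₂_self X (Coalgebra.comul (R := R) (A := A))
  exact LinearMap.congr_fun (IsTailExtension.extension_congr
    ((IsTailExtension.headMap₁₂ _ _).comp comul) ((comul.lTensor A).comp comul)
    Coalgebra.coassoc) x

theorem counit_comul (x : A ⊗[R] X) : ℰ (Φ x) = x := by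
  have comul := IsTailExtension.headMap₁₂_self X (Coalgebra.comul (R := R) (A := A))
  refine LinearMap.congr_fun (IsTailExtension.extension_congr
    ((IsTailExtension.headMap₁₀ _ _).comp comul) (IsTailExtension.id _) ?_) x
  ext a
  simp [headMap₁₀]

theorem lTensor_counit_comul (x : A ⊗[R] X) : ↟ℰ (Φ x) = x := by
  have comul := IsTailExtension.headMap₁₂_self X (Coalgebra.comul (R := R) (A := A))
  refine LinearMap.congr_fun (IsTailExtension.extension_congr
    ((IsTailExtension.rid_comp_lTensor X A _).comp comul) (IsTailExtension.id _) ?_) x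
  ext a
  simp

theorem mul_antipode_comul (x : A ⊗[R] X) : μ (𝓚 (Φ x)) = (1 : A) ⊗ₜ[R] ℰ x := by
  have comul := IsTailExtension.headMap₁₂_self X (Coalgebra.comul (R := R) (A := A))
  have mul := IsTailExtension.headMap₂₁_self X (LinearMap.mul' R A)
  exact LinearMap.congr_fun (IsTailExtension.extension_congr
    (mul.comp ((IsTailExtension.rTensor _ _).comp comul))
    (IsTailExtension.algebraLinearMap_comp X A _) H.mul_antipode_left) x

theorem mul_lTensor_antipode_comul (x : A ⊗[R] X) : μ (↟𝓚 (Φ x)) = (1 : A) ⊗ₜ[R] ℰ x := by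
  have comul := IsTailExtension.headMap₁₂_self X (Coalgebra.comul (R := R) (A := A))
  have mul := IsTailExtension.headMap₂₁_self X (LinearMap.mul' R A)
  exact LinearMap.congr_fun (IsTailExtension.extension_congr
    (mul.comp (((IsTailExtension.rTensor_self X H.κ).lTensor A).comp comul))
    (IsTailExtension.algebraLinearMap_comp X A _) H.mul_antipode_right) x

theorem comul_mul_apply (x : A ⊗[R] (A ⊗[R] X)) :
    Φ (μ x) = μ (↟↟μ (↟𝓢 (Φ (↟Φ x)))) := by
  have comul := IsTailExtension.headMap₁₂_self X (Coalgebra.comul (R := R) (A := A))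
  have mul := IsTailExtension.headMap₂₁_self X (LinearMap.mul' R A)
  exact LinearMap.congr_fun (IsTailExtension.extension_congr (comul.comp mul)
    ((IsTailExtension.headMap₂₁ _ _).comp <| ((mul.lTensor A).lTensor A).comp <|
      ((IsTailExtension.headMap₂₂ _ _).lTensor A).comp <|
        (IsTailExtension.headMap₁₂ _ _).comp (comul.lTensor A)) H.comul_mul) x

theorem mixed_coassoc_apply (x : A ⊗[R] (A ⊗[R] X)) :
    𝓢 (↟Φ (𝓢⁻ (↟Φ x))) = ↟↟𝓢 (↟Φ (↟𝓢⁻ (Φ x))) := by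
  have comul := IsTailExtension.headMap₁₂_self X (Coalgebra.comul (R := R) (A := A))
  have comul₂ := IsTailExtension.headMap₁₂ (.refl R (A ⊗[R] X)) (Coalgebra.comul (R := R) (A := A))
  have braid (s : A ⊗[R] A →ₗ[R] A ⊗[R] A) := IsTailExtension.headMap₂₂_self X s
  exact LinearMap.congr_fun (IsTailExtension.extension_congr
    ((IsTailExtension.headMap₂₂ _ _).comp <| (comul₂.lTensor A).comp <|
      (IsTailExtension.headMap₂₂ _ _).comp (comul.lTensor A))
    ((((braid _).lTensor A).lTensor A).comp <| (comul₂.lTensor A).comp <|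
      ((braid _).lTensor A).comp comul₂) H.mixed_coassoc) x

theorem braid_lTensor_lTensor (g : X →ₗ[R] Y) (x : A ⊗[R] (A ⊗[R] X)) :
    𝓢 (↟↟g x) = ↟↟g (𝓢 x) := headMap₂₂_lTensor _ g x

theorem braidInv_lTensor_lTensor (g : X →ₗ[R] Y) (x : A ⊗[R] (A ⊗[R] X)) :
    𝓢⁻ (↟↟g x) = ↟↟g (𝓢⁻ x) := headMap₂₂_lTensor _ g x

theorem antipode_lTensor (g : X →ₗ[R] Y) (x : A ⊗[R] X) : 𝓚 (↟g x) = ↟g (𝓚 x) := by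
  rw [← comp_apply, ← comp_apply, rTensor_comp_lTensor, lTensor_comp_rTensor]

theorem mul_antipode_lTensor_mul_comul (x : A ⊗[R] (A ⊗[R] X)) : μ (𝓚 (↟μ (Φ x))) = ℰ x := by
  rw [H.antipode_lTensor, headMap₂₁_mul'_assoc, H.mul_antipode_comul, headMap₂₁_mul'_one_tmul]

theorem mul_lTensor_antipode_mul_lTensor_comul (x : A ⊗[R] (A ⊗[R] X)) :
    μ (↟𝓚 (μ (↟Φ x))) = ↟ℰ x :=
  calc μ (↟𝓚 (μ (↟Φ x)))
    _ = μ (↟μ (↟↟𝓚 (↟Φ x))) := by rw [← headMap₂₁_lTensor, headMap₂₁_mul'_assoc]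
    _ = μ (↟(TensorProduct.mk R A X 1) (↟ℰ x)) := by
      rw [lTensor_trapezoid A (k := TensorProduct.mk R A X 1 ∘ₗ ℰ) H.mul_lTensor_antipode_comul,
        lTensor_comp_apply]
    _ = ↟ℰ x := headMap₂₁_mul'_lTensor_one_tmul _

variable (X) in
/-- `τ⁻¹ ⊗ id_X`, by the formula `(id² ⊗ ε)(id ⊗ σ)(φ ⊗ id)σ⁻¹`. -/
def tauInv : A ⊗[R] (A ⊗[R] X) →ₗ[R] A ⊗[R] (A ⊗[R] X) :=
  ↟↟ℰ ∘ₗ ↟𝓢 ∘ₗ Φ ∘ₗ 𝓢⁻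

theorem tauInv_lTensor_lTensor (g : X →ₗ[R] Y) (x : A ⊗[R] (A ⊗[R] X)) :
    H.tauInv Y (↟↟g x) = ↟↟g (H.tauInv X x) := by
  simp only [tauInv, comp_apply]
  rw [H.braidInv_lTensor_lTensor, headMap₁₂_lTensor,
    lTensor_square A (H.braid_lTensor_lTensor g),
    lTensor_square A (lTensor_square A (headMap₁₀_lTensor _ g))]

theorem braid_lTensor_comul_braidInv (x : A ⊗[R] (A ⊗[R] X)) :
    𝓢 (↟Φ (𝓢⁻ x)) = ↟(H.tauInv X) (Φ x) :=
  calc 𝓢 (↟Φ (𝓢⁻ x))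
    _ = 𝓢 (↟Φ (𝓢⁻ (↟↟ℰ (↟Φ x)))) := by rw [lTensor_leftInverse A lTensor_counit_comul x]
    _ = ↟↟↟ℰ (𝓢 (↟Φ (𝓢⁻ (↟Φ x)))) := by
      rw [H.braidInv_lTensor_lTensor, lTensor_square A (headMap₁₂_lTensor _ _),
        H.braid_lTensor_lTensor]
    _ = ↟↟↟ℰ (↟↟𝓢 (↟Φ (↟𝓢⁻ (Φ x)))) := by rw [H.mixed_coassoc_apply]
    _ = ↟(H.tauInv X) (Φ x) := by simp only [tauInv, lTensor_comp, comp_apply]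

theorem braid_lTensor_comul (x : A ⊗[R] (A ⊗[R] X)) :
    𝓢 (↟Φ x) = ↟(H.tauInv X) (Φ (𝓢 x)) := by
  rw [← H.braid_lTensor_comul_braidInv, H.braidInv_braid]

theorem lTensor_comul_braidInv (x : A ⊗[R] (A ⊗[R] X)) :
    ↟Φ (𝓢⁻ x) = 𝓢⁻ (↟(H.tauInv X) (Φ x)) := by
  rw [← H.braid_lTensor_comul_braidInv, H.braidInv_braid]

theorem counit_braid_lTensor_comul_braidInv (x : A ⊗[R] (A ⊗[R] X)) :
    ℰ (𝓢 (↟Φ (𝓢⁻ x))) = H.tauInv X x := by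
  rw [H.braid_lTensor_comul_braidInv, headMap₁₀_lTensor, counit_comul]

theorem lTensor_braid_comul_braidInv (x : A ⊗[R] (A ⊗[R] X)) :
    ↟𝓢 (Φ (𝓢⁻ x)) = H.tauInv _ (↟Φ x) := by
  rw [← H.counit_braid_lTensor_comul_braidInv, H.mixed_coassoc_apply, headMap₁₀_lTensor,
    headMap₁₀_lTensor, headMap₁₀_lTensor, counit_comul]

theorem lTensor_braid_comul (x : A ⊗[R] (A ⊗[R] X)) :
    ↟𝓢 (Φ x) = H.tauInv _ (↟Φ (𝓢 x)) := by
  rw [← H.lTensor_braid_comul_braidInv, H.braidInv_braid]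

theorem lTensor_counit_tauInv (x : A ⊗[R] (A ⊗[R] X)) : ↟ℰ (H.tauInv X x) = ℰ x := by
  rw [← H.counit_braid_lTensor_comul_braidInv, ← headMap₁₀_lTensor, ← H.braid_lTensor_lTensor,
    lTensor_leftInverse A lTensor_counit_comul, H.braid_braidInv]

theorem comul_tauInv (x : A ⊗[R] (A ⊗[R] X)) :
    Φ (H.tauInv X x) = ↟(H.tauInv X) (H.tauInv _ (↟Φ x)) := by
  rw [← H.lTensor_braid_comul_braidInv]
  simp only [tauInv, lTensor_comp, comp_apply]
  rw [headMap₁₂_lTensor, headMap₁₂_lTensor, comul_comul, lTensor_leftInverse A H.braidInv_braid]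

variable (X) in
/-- The functional `ε m τ⁻¹` on `A ⊗ A`, tensored with `id_X`; it equals `(ε ⊗ ε)σ⁻¹`. -/
def counitMulTauInv : A ⊗[R] (A ⊗[R] X) →ₗ[R] X := ℰ ∘ₗ μ ∘ₗ H.tauInv X

theorem counitMulTauInv_lTensor_lTensor (g : X →ₗ[R] Y) (x : A ⊗[R] (A ⊗[R] X)) :
    H.counitMulTauInv Y (↟↟g x) = g (H.counitMulTauInv X x) := by
  simp only [counitMulTauInv, comp_apply]
  rw [H.tauInv_lTensor_lTensor, headMap₂₁_lTensor, headMap₁₀_lTensor]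

variable (X) in
/-- The candidate `(id ⊗ h)(φ ⊗ id)σ` for `ε ⊗ id`, where `h = εmτ⁻¹`, tensored with `id_X`. -/
def braidedCounitLeft : A ⊗[R] (A ⊗[R] X) →ₗ[R] A ⊗[R] X := ↟(H.counitMulTauInv X) ∘ₗ Φ ∘ₗ 𝓢

variable (X) in
/-- The candidate `(h ⊗ id)(id ⊗ φ)σ` for `id ⊗ ε`, where `h = εmτ⁻¹`, tensored with `id_X`. -/
def braidedCounitRight : A ⊗[R] (A ⊗[R] X) →ₗ[R] A ⊗[R] X :=
  H.counitMulTauInv (A ⊗[R] X) ∘ₗ ↟Φ ∘ₗ 𝓢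

theorem mul_lTensor_braidedCounitLeft_comul (x : A ⊗[R] (A ⊗[R] X)) :
    μ (↟(H.braidedCounitLeft X) (Φ x)) = μ x :=
  calc μ (↟(H.braidedCounitLeft X) (Φ x))
    _ = μ (↟↟ℰ (↟↟μ (↟↟(H.tauInv X) (↟Φ (↟𝓢 (Φ x)))))) := by
      simp only [braidedCounitLeft, counitMulTauInv, lTensor_comp, comp_apply]
    _ = μ (↟↟ℰ (↟↟μ (↟𝓢 (Φ (↟Φ x))))) := by
      rw [headMap₁₂_lTensor, lTensor_pentagon A H.braid_lTensor_comul]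
    _ = ↟ℰ (Φ (μ x)) := by rw [H.comul_mul_apply, headMap₂₁_lTensor]
    _ = μ x := lTensor_counit_comul _

theorem braidedCounitLeft_eq_counit (x : A ⊗[R] (A ⊗[R] X)) : H.braidedCounitLeft X x = ℰ x :=
  calc H.braidedCounitLeft X x
    _ = ℰ (↟(H.braidedCounitLeft X) (Φ x)) := by rw [headMap₁₀_lTensor, counit_comul]
    _ = μ (𝓚 (↟μ (Φ (↟(H.braidedCounitLeft X) (Φ x))))) := by
      rw [H.mul_antipode_lTensor_mul_comul]
    _ = μ (𝓚 (↟μ (↟↟(H.braidedCounitLeft X) (↟Φ (Φ x))))) := by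
      rw [headMap₁₂_lTensor, comul_comul]
    _ = μ (𝓚 (↟μ (Φ x))) := by
      rw [lTensor_trapezoid A H.mul_lTensor_braidedCounitLeft_comul]
    _ = ℰ x := H.mul_antipode_lTensor_mul_comul x

theorem braidedCounitRight_lTensor_lTensor (g : X →ₗ[R] Y) (x : A ⊗[R] (A ⊗[R] X)) :
    H.braidedCounitRight Y (↟↟g x) = ↟g (H.braidedCounitRight X x) := by
  simp only [braidedCounitRight, comp_apply]
  rw [H.braid_lTensor_lTensor, lTensor_square A (headMap₁₂_lTensor _ g),
    H.counitMulTauInv_lTensor_lTensor]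

theorem mul_braidedCounitRight_lTensor_comul (x : A ⊗[R] (A ⊗[R] X)) :
    μ (H.braidedCounitRight _ (↟Φ x)) = μ x :=
  calc μ (H.braidedCounitRight _ (↟Φ x))
    _ = μ (ℰ (μ (H.tauInv _ (↟Φ (𝓢 (↟Φ x)))))) := rfl
    _ = μ (ℰ (μ (↟𝓢 (Φ (↟Φ x))))) := by rw [H.lTensor_braid_comul]
    _ = ℰ (Φ (μ x)) := by rw [H.comul_mul_apply, headMap₂₁_lTensor, headMap₁₀_lTensor]
    _ = μ x := counit_comul _

theorem braidedCounitRight_eq_lTensor_counit (x : A ⊗[R] (A ⊗[R] X)) :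
    H.braidedCounitRight X x = ↟ℰ x :=
  calc H.braidedCounitRight X x
    _ = H.braidedCounitRight X (↟↟ℰ (↟Φ x)) := by rw [lTensor_leftInverse A lTensor_counit_comul]
    _ = ↟ℰ (H.braidedCounitRight _ (↟Φ x)) := by rw [H.braidedCounitRight_lTensor_lTensor]
    _ = μ (↟𝓚 (μ (↟Φ (H.braidedCounitRight _ (↟Φ x))))) := by
      rw [H.mul_lTensor_antipode_mul_lTensor_comul]
    _ = μ (↟𝓚 (μ (H.braidedCounitRight _ (↟Φ (↟Φ x))))) := by
      rw [← H.braidedCounitRight_lTensor_lTensor, lTensor_square A comul_comul]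
    _ = μ (↟𝓚 (μ (↟Φ x))) := by rw [H.mul_braidedCounitRight_lTensor_comul]
    _ = ↟ℰ x := H.mul_lTensor_antipode_mul_lTensor_comul x

theorem lTensor_counitMulTauInv_comul (x : A ⊗[R] (A ⊗[R] X)) :
    ↟(H.counitMulTauInv X) (Φ x) = ℰ (𝓢⁻ x) := by
  rw [← H.braidedCounitLeft_eq_counit, braidedCounitLeft, comp_apply, comp_apply, H.braid_braidInv]

theorem counitMulTauInv_lTensor_comul (x : A ⊗[R] (A ⊗[R] X)) :
    H.counitMulTauInv _ (↟Φ x) = ↟ℰ (𝓢⁻ x) := by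
  rw [← H.braidedCounitRight_eq_lTensor_counit, braidedCounitRight, comp_apply, comp_apply,
    H.braid_braidInv]

theorem counitMulTauInv_braid (x : A ⊗[R] (A ⊗[R] X)) : H.counitMulTauInv X (𝓢 x) = ℰ (ℰ x) := by
  rw [← H.braidedCounitLeft_eq_counit, braidedCounitLeft, comp_apply, comp_apply,
    headMap₁₀_lTensor, counit_comul]

variable (X) in
/-- `τσ⁻¹ ⊗ id_X`, by the formula `(id² ⊗ ε)(id ⊗ σ⁻¹)(φ ⊗ id)`. -/
def tauBraidInv : A ⊗[R] (A ⊗[R] X) →ₗ[R] A ⊗[R] (A ⊗[R] X) := ↟↟ℰ ∘ₗ ↟𝓢⁻ ∘ₗ Φ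

theorem tauBraidInv_eq_counit_braidInv (x : A ⊗[R] (A ⊗[R] X)) :
    H.tauBraidInv X x = ℰ (𝓢⁻ (↟Φ x)) :=
  calc H.tauBraidInv X x
    _ = ↟↟ℰ (↟𝓢⁻ (Φ x)) := rfl
    _ = ↟(H.counitMulTauInv _) (↟↟Φ (Φ x)) := by
      rw [← lTensor_square A H.counitMulTauInv_lTensor_comul]
    _ = ↟(H.counitMulTauInv _) (Φ (↟Φ x)) := by rw [headMap₁₂_lTensor]
    _ = ℰ (𝓢⁻ (↟Φ x)) := H.lTensor_counitMulTauInv_comul _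

theorem comul_tauBraidInv (x : A ⊗[R] (A ⊗[R] X)) :
    Φ (H.tauBraidInv X x) = ↟(H.tauBraidInv X) (Φ x) := by
  simp only [tauBraidInv, lTensor_comp, comp_apply]
  rw [headMap₁₂_lTensor, headMap₁₂_lTensor, comul_comul]

theorem tauInv_tauBraidInv (x : A ⊗[R] (A ⊗[R] X)) :
    H.tauInv X (H.tauBraidInv X x) = 𝓢⁻ x :=
  .symm <| calc 𝓢⁻ x
    _ = ↟ℰ (↟Φ (𝓢⁻ x)) := (lTensor_leftInverse A counit_comul _).symm
    _ = ↟ℰ (𝓢⁻ (↟(H.tauInv X) (Φ x))) := by rw [H.lTensor_comul_braidInv]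
    _ = H.counitMulTauInv _ (↟Φ (↟(H.tauInv X) (Φ x))) := by rw [H.counitMulTauInv_lTensor_comul]
    _ = H.counitMulTauInv _ (↟↟(H.tauInv X) (↟(H.tauInv _) (↟↟Φ (Φ x)))) := by
      rw [lTensor_pentagon A H.comul_tauInv]
    _ = H.tauInv X (H.counitMulTauInv _ (𝓢 (↟Φ (𝓢⁻ (↟Φ x))))) := by
      rw [H.counitMulTauInv_lTensor_lTensor, ← headMap₁₂_lTensor, H.braid_lTensor_comul_braidInv]
    _ = H.tauInv X (ℰ (𝓢⁻ (↟Φ x))) := by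
      rw [H.counitMulTauInv_braid, headMap₁₀_lTensor, counit_comul]
    _ = H.tauInv X (H.tauBraidInv X x) := by rw [H.tauBraidInv_eq_counit_braidInv]

variable (X) in
/-- `(ε ⊗ id)σ`, tensored with `id_X`. -/
def counitBraid : A ⊗[R] (A ⊗[R] X) →ₗ[R] A ⊗[R] X := ℰ ∘ₗ 𝓢

theorem lTensor_counitBraid_comul (x : A ⊗[R] (A ⊗[R] X)) :
    ↟(H.counitBraid X) (Φ x) = Φ (H.counitBraid X x) := by
  simp only [counitBraid, lTensor_comp, comp_apply]
  rw [H.lTensor_braid_comul, H.lTensor_counit_tauInv, headMap₁₀_lTensor]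

variable (X) in
/-- `στ⁻¹ ⊗ id_X`, by the formula `(id ⊗ (ε ⊗ id)στ⁻¹)(φ ⊗ id)`. -/
def braidTauInv : A ⊗[R] (A ⊗[R] X) →ₗ[R] A ⊗[R] (A ⊗[R] X) :=
  ↟(H.counitBraid X) ∘ₗ ↟(H.tauInv X) ∘ₗ Φ

theorem braidTauInv_tauBraidInv (x : A ⊗[R] (A ⊗[R] X)) :
    H.braidTauInv X (H.tauBraidInv X x) = x :=
  calc H.braidTauInv X (H.tauBraidInv X x)
    _ = ↟ℰ (↟𝓢 (↟(H.tauInv X) (↟(H.tauBraidInv X) (Φ x)))) := by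
      simp only [braidTauInv, counitBraid, lTensor_comp, comp_apply, H.comul_tauBraidInv]
    _ = ↟ℰ (↟𝓢 (↟𝓢⁻ (Φ x))) := by rw [lTensor_triangle A H.tauInv_tauBraidInv]
    _ = x := by rw [lTensor_leftInverse A H.braid_braidInv, lTensor_counit_comul]

theorem lTensor_braidTauInv_braidInv_lTensor_comul (x : A ⊗[R] (A ⊗[R] X)) :
    ↟(H.braidTauInv X) (𝓢⁻ (↟Φ x)) = 𝓢⁻ (↟Φ (H.braidTauInv X x)) :=
  calc ↟(H.braidTauInv X) (𝓢⁻ (↟Φ x))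
    _ = ↟↟(H.counitBraid X) (↟↟(H.tauInv X) (↟Φ (𝓢⁻ (↟Φ x)))) := by
      simp only [braidTauInv, lTensor_comp, comp_apply]
    _ = 𝓢⁻ (↟↟(H.counitBraid X) (↟↟(H.tauInv X) (↟(H.tauInv _) (↟↟Φ (Φ x))))) := by
      rw [H.lTensor_comul_braidInv, ← H.braidInv_lTensor_lTensor, ← H.braidInv_lTensor_lTensor,
        headMap₁₂_lTensor]
    _ = 𝓢⁻ (↟↟(H.counitBraid X) (↟Φ (↟(H.tauInv X) (Φ x)))) := by
      rw [← lTensor_pentagon A H.comul_tauInv]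
    _ = 𝓢⁻ (↟Φ (H.braidTauInv X x)) := by
      rw [lTensor_square A H.lTensor_counitBraid_comul]
      rfl

theorem tauBraidInv_braidTauInv (x : A ⊗[R] (A ⊗[R] X)) :
    H.tauBraidInv X (H.braidTauInv X x) = x := by
  rw [H.tauBraidInv_eq_counit_braidInv, ← H.lTensor_braidTauInv_braidInv_lTensor_comul,
    headMap₁₀_lTensor, ← H.tauBraidInv_eq_counit_braidInv, H.braidTauInv_tauBraidInv]

theorem tauBraidInv_braid_tauInv (x : A ⊗[R] (A ⊗[R] X)) :
    H.tauBraidInv X (𝓢 (H.tauInv X x)) = x := by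
  obtain ⟨y, rfl⟩ : ∃ y, H.tauBraidInv X y = x := ⟨_, H.tauBraidInv_braidTauInv x⟩
  rw [H.tauInv_tauBraidInv, H.braid_braidInv]

theorem comul_braid (x : A ⊗[R] (A ⊗[R] X)) :
    Φ (𝓢 x) = ↟(H.tauBraidInv X) (↟𝓢 (𝓢 (↟Φ x))) := by
  rw [H.braid_lTensor_comul, lTensor_trapezoid A (k := LinearMap.id) H.tauBraidInv_braid_tauInv,
    lTensor_id_apply]

/-- The secondary braiding `τ = (id² ⊗ ε)(id ⊗ σ⁻¹)(φ ⊗ id)σ`. -/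
def tau : A ⊗[R] A →ₗ[R] A ⊗[R] A :=
  ((TensorProduct.rid R A).toLinearMap ∘ₗ Coalgebra.counit.lTensor A).lTensor A ∘ₗ
    H.σ.symm.toLinearMap.lTensor A ∘ₗ headMap₁₂ Coalgebra.comul A ∘ₗ H.σ.toLinearMap

end PreBQG

theorem bqg_pentagon_1_general {R A : Type*} [CommSemiring R] [Semiring A] [Algebra R A]
    [Coalgebra R A] (H : PreBQG R A) :
    headMap₁₂ Coalgebra.comul A ∘ₗ H.σ.toLinearMap =
      H.tau.lTensor A ∘ₗ headMap₂₂ H.σ.toLinearMap A ∘ₗ Coalgebra.comul.lTensor A := by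
  have comul := IsTailExtension.headMap₁₂_self R (Coalgebra.comul (R := R) (A := A))
  have comul₂ := IsTailExtension.headMap₁₂ (.refl R (A ⊗[R] R))
    (Coalgebra.comul (R := R) (A := A))
  have braid (s : A ⊗[R] A →ₗ[R] A ⊗[R] A) := IsTailExtension.headMap₂₂_self R s
  have tau : IsTailExtension _ _ H.tau (H.tauBraidInv R ∘ₗ headMap₂₂ H.σ.toLinearMap R) :=
    ((IsTailExtension.rid_comp_lTensor R A _).lTensor A).comp <|
      ((braid _).lTensor A).comp <| comul₂.comp (braid _)
  refine IsTailExtension.eq_of_extension_eq (comul₂.comp (braid _))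
    ((tau.lTensor A).comp <| (IsTailExtension.headMap₂₂ _ _).comp (comul.lTensor A)) ?_
  refine LinearMap.ext fun x => ?_
  simpa only [lTensor_comp, comp_apply] using H.comul_braid x

namespace BQG

variable {A : Type*} [Ring A] [Algebra ℂ A] (G : BQG A)

/-- The coproduct and counit of a braided quantum group, as a coalgebra structure. -/
abbrev coalgebra : Coalgebra ℂ A where
  comul := G.φ
  counit := G.ε
  coassoc := G.coassoc
  rTensor_counit_comp_comul := by
    refine (LinearMap.cancel_left (TensorProduct.lid ℂ A).injective).mp (G.counit_left.trans ?_)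
    ext; simp
  lTensor_counit_comp_comul := by
    refine (LinearMap.cancel_left (TensorProduct.rid ℂ A).injective).mp (G.counit_right.trans ?_)
    ext; simp

/-- A braided quantum group as a `PreBQG` over `ℂ`, on the coalgebra `BQG.coalgebra`. -/
def toPreBQG : @PreBQG ℂ A _ _ _ G.coalgebra :=
  letI := G.coalgebra
  { κ := G.κ
    σ := LinearEquiv.ofLinearMap G.σ G.σ' G.σ_comp G.comp_σ
    comul_mul := G.comul_mul
    mixed_coassoc := G.mixed_coassoc
    mul_antipode_left := G.antipode_left
    mul_antipode_right := G.antipode_right }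

end BQG

/-- Pentagonal twisting relation `(φ⊗id)σ = (id⊗τ)(σ⊗id)(id⊗φ)`. -/
theorem bqg_pentagon_1 {A : Type*} [Ring A] [Algebra ℂ A] (G : BQG A) :
    G.φ1 ∘ₗ G.σ = op23 G.τ ∘ₗ op12 G.σ ∘ₗ G.φ2 :=
  letI := G.coalgebra
  bqg_pentagon_1_general G.toPreBQG
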